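/- arXiv:2003.08045 — 2 statements merged into one kernel-verified Lean document; each statement's English description precedes it below -/
import Mathlib

section
/- Let R be a commutative ring, fix n ≥ 1, and let D, δ₁, δ₂ : R → R be derivations such that D commutes with δ₁ and with δ₂. Let A be an n×n matrix over R, and let g and ψ be invertible n×n matrices over R with D(ψ) = -A·ψ (all maps applied to matrices entrywise). Set A' := g⁻¹·D(g) + g⁻¹·A·g, ψ' := g⁻¹·ψ, and for l ∈ {1,2} set u⁽ˡ⁾ := δ_l(g)·g⁻¹ and ũ⁽ˡ⁾ := g⁻¹·δ_l(g). Then [Tr(δ₁(A')·δ₂(ψ')·(ψ')⁻¹) − Tr(δ₁(ψ')·(ψ')⁻¹·δ₂(A'))] − [Tr(δ₁(A)·δ₂(ψ)·ψ⁻¹) − Tr(δ₁(ψ)·ψ⁻¹·δ₂(A))] = −Tr(δ₁(A')·ũ⁽²⁾ − ũ⁽¹⁾·δ₂(A')) − Tr(δ₁(A)·u⁽²⁾ − u⁽¹⁾·δ₂(A)) + D(Tr(ψ⁻¹·u⁽¹⁾·δ₂(ψ) − ψ⁻¹·u⁽²⁾·δ₁(ψ))). -/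
/-!
Write `p⁽ˡ⁾ = δ_l(ψ)·ψ⁻¹`. Three identities carry the proof:
* `δ_l(ψ')·ψ'⁻¹ = -ut⁽ˡ⁾ + g⁻¹·p⁽ˡ⁾·g` (`logDeriv_gauge`);
* `g·δ_l(A')·g⁻¹ - δ_l(A) = D(u⁽ˡ⁾) + [A, u⁽ˡ⁾]` (`variation_gauge`): the variation of the
  connection under an infinitesimal gauge transformation is a covariant derivative;
* `D(p⁽ˡ⁾) = -δ_l(A) + [p⁽ˡ⁾, A]` (`deriv_logDeriv`), from `D(ψ) = -A·ψ`.

The first splits off the terms with `ut⁽ˡ⁾`. By the other two, together with invariance of the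
pairing `Tr(x·y)` under commutators,
`Tr((g·δ₁(A')·g⁻¹ - δ₁(A))·p⁽²⁾) = D(Tr(u⁽¹⁾·p⁽²⁾)) + Tr(u⁽¹⁾·δ₂(A))` (`trace_variation_mul`);
antisymmetrizing in the two variations gives the formula.
-/

/-- A derivation of a commutative ring: an additive map satisfying the Leibniz rule. -/
def IsDerivation {R : Type*} [CommRing R] (D : R → R) : Prop :=
  (∀ a b, D (a + b) = D a + D b) ∧ (∀ a b, D (a * b) = D a * b + a * D b)

namespace IsDerivation

variable {R : Type*} [CommRing R] {n : ℕ} {D δ : R → R}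

/-- A derivation as an additive homomorphism, giving access to lemmas on finite sums. -/
def toAddHom (h : IsDerivation D) : R →+ R := AddMonoidHom.mk' D h.1

theorem map_one (h : IsDerivation D) : D 1 = 0 := by
  have := h.2 1 1
  simpa using this

theorem map_zero (h : IsDerivation D) : D 0 = 0 := h.toAddHom.map_zero

theorem map_sub (h : IsDerivation D) (a b : R) : D (a - b) = D a - D b :=
  h.toAddHom.map_sub a b

theorem map_sum (h : IsDerivation D) {ι : Type*} (s : Finset ι) (f : ι → R) :
    D (∑ i ∈ s, f i) = ∑ i ∈ s, D (f i) :=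
  _root_.map_sum h.toAddHom f s

theorem matrix_add (h : IsDerivation D) (M N : Matrix (Fin n) (Fin n) R) :
    (M + N).map D = M.map D + N.map D := by
  ext i j
  simp [h.1]

theorem matrix_neg (h : IsDerivation D) (M : Matrix (Fin n) (Fin n) R) :
    (-M).map D = -M.map D := by
  ext i j
  exact h.toAddHom.map_neg _

theorem matrix_mul (h : IsDerivation D) (M N : Matrix (Fin n) (Fin n) R) :
    (M * N).map D = M.map D * N + M * N.map D := by
  ext i j
  simp [Matrix.mul_apply, h.map_sum, h.2, Finset.sum_add_distrib]

theorem matrix_one (h : IsDerivation D) : (1 : Matrix (Fin n) (Fin n) R).map D = 0 := by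
  ext i j
  by_cases hij : i = j <;> simp [hij, h.map_one, h.map_zero]

theorem trace (h : IsDerivation D) (M : Matrix (Fin n) (Fin n) R) :
    D M.trace = (M.map D).trace := by
  simp [Matrix.trace, h.map_sum]

theorem matrix_inv (h : IsDerivation D) {M N : Matrix (Fin n) (Fin n) R} (hMN : M * N = 1)
    (hNM : N * M = 1) : N.map D = -(N * M.map D * N) := by
  have h1 := h.matrix_mul M N
  rw [hMN, h.matrix_one] at h1
  have h2 : N * (M.map D * N + M * N.map D) = 0 := by rw [← h1, mul_zero]
  rw [mul_add, ← mul_assoc, ← mul_assoc, hNM, one_mul] at h2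
  exact eq_neg_of_add_eq_zero_right h2

theorem matrix_comm (hc : D ∘ δ = δ ∘ D) (M : Matrix (Fin n) (Fin n) R) :
    (M.map δ).map D = (M.map D).map δ := by
  rw [Matrix.map_map, Matrix.map_map, hc]

/-- The logarithmic derivative of `g⁻¹ * ψ`; `h` and `φ` stand for the inverses of `g`, `ψ`. -/
theorem logDeriv_gauge (hδ : IsDerivation δ) {g h ψ φ : Matrix (Fin n) (Fin n) R}
    (hgh : g * h = 1) (hhg : h * g = 1) (hψφ : ψ * φ = 1) :
    (h * ψ).map δ * (φ * g) = -(h * g.map δ) + h * (ψ.map δ * φ) * g := by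
  rw [hδ.matrix_mul, hδ.matrix_inv hgh hhg]
  calc _ = -(h * g.map δ * (h * (ψ * φ) * g)) + h * (ψ.map δ * φ) * g := by noncomm_ring
    _ = _ := by rw [hψφ, mul_one, hhg, mul_one]

/-- The variation of the gauge transformed connection matrix, conjugated back by `g`, differs
from that of `A` by the covariant derivative of `δ(g) * g⁻¹`; `h` stands for `g⁻¹`. -/
theorem variation_gauge (hD : IsDerivation D) (hδ : IsDerivation δ) (hc : D ∘ δ = δ ∘ D)
    {g h : Matrix (Fin n) (Fin n) R} (A : Matrix (Fin n) (Fin n) R)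
    (hgh : g * h = 1) (hhg : h * g = 1) :
    g * (h * g.map D + h * A * g).map δ * h =
      A.map δ + (g.map δ * h).map D + (A * (g.map δ * h) - g.map δ * h * A) := by
  rw [hδ.matrix_add, hδ.matrix_mul, hδ.matrix_mul, hδ.matrix_mul, hD.matrix_mul,
    hδ.matrix_inv hgh hhg, hD.matrix_inv hgh hhg, matrix_comm hc]
  calc _ = -((g * h) * g.map δ * h * g.map D * h) + (g * h) * (g.map D).map δ * h
        + (-((g * h) * g.map δ * h * A * (g * h)) + (g * h) * A.map δ * (g * h)
          + (g * h) * A * g.map δ * h) := by noncomm_ring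
    _ = _ := by
      rw [hgh]
      noncomm_ring

/-- The logarithmic derivative `δ(ψ) * ψ⁻¹` of a solution satisfies the linearized equation;
`φ` stands for `ψ⁻¹`. -/
theorem deriv_logDeriv (hD : IsDerivation D) (hδ : IsDerivation δ) (hc : D ∘ δ = δ ∘ D)
    {A ψ φ : Matrix (Fin n) (Fin n) R} (hψφ : ψ * φ = 1) (hφψ : φ * ψ = 1)
    (hsol : ψ.map D = -(A * ψ)) :
    (ψ.map δ * φ).map D = -A.map δ + (ψ.map δ * φ * A - A * (ψ.map δ * φ)) := by
  rw [hD.matrix_mul, hD.matrix_inv hψφ hφψ, matrix_comm hc, hsol, hδ.matrix_neg, hδ.matrix_mul]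
  calc _ = -(A.map δ * (ψ * φ)) + (ψ.map δ * φ * A * (ψ * φ) - A * (ψ.map δ * φ)) := by
        noncomm_ring
    _ = _ := by rw [hψφ, mul_one, mul_one]

/-- Pairing the covariant derivative of `u` with a solution `p` of `D(p) = -B + [p, A]`:
integration by parts, with `B` playing the role of the variation of `A`. -/
theorem trace_variation_mul (hD : IsDerivation D) {A B u p : Matrix (Fin n) (Fin n) R}
    (hp : p.map D = -B + (p * A - A * p)) :
    ((u.map D + (A * u - u * A)) * p).trace = D (u * p).trace + (u * B).trace := by
  rw [hD.trace, hD.matrix_mul, hp]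
  simp only [add_mul, sub_mul, mul_add, mul_sub, mul_neg, Matrix.trace_add, Matrix.trace_sub,
    Matrix.trace_neg]
  rw [show (A * u * p).trace = (u * (p * A)).trace by
    rw [mul_assoc, Matrix.trace_mul_comm, mul_assoc], mul_assoc u A p]
  ring

end IsDerivation

/-- The transformation formula for Krichever's 2-form pairing under a gauge
transformation `g`: with `A' = g⁻¹·D(g) + g⁻¹·A·g`, `ψ' = g⁻¹·ψ`,
`u⁽ˡ⁾ = δ_l(g)·g⁻¹`, `ut⁽ˡ⁾ = g⁻¹·δ_l(g)`. -/
theorem stmt0 {R : Type*} [CommRing R] (n : ℕ) (hn : 1 ≤ n)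
    (D δ₁ δ₂ : R → R)
    (hD : IsDerivation D) (hδ₁ : IsDerivation δ₁) (hδ₂ : IsDerivation δ₂)
    (hcomm₁ : D ∘ δ₁ = δ₁ ∘ D) (hcomm₂ : D ∘ δ₂ = δ₂ ∘ D)
    (A g ψ : Matrix (Fin n) (Fin n) R)
    (hg : IsUnit g) (hψ : IsUnit ψ)
    (hsol : ψ.map D = -(A * ψ)) :
    let A' : Matrix (Fin n) (Fin n) R := g⁻¹ * g.map D + g⁻¹ * A * g
    let ψ' : Matrix (Fin n) (Fin n) R := g⁻¹ * ψ
    let u₁ : Matrix (Fin n) (Fin n) R := g.map δ₁ * g⁻¹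
    let u₂ : Matrix (Fin n) (Fin n) R := g.map δ₂ * g⁻¹
    let ut₁ : Matrix (Fin n) (Fin n) R := g⁻¹ * g.map δ₁
    let ut₂ : Matrix (Fin n) (Fin n) R := g⁻¹ * g.map δ₂
    ((A'.map δ₁ * ψ'.map δ₂ * ψ'⁻¹).trace - (ψ'.map δ₁ * ψ'⁻¹ * A'.map δ₂).trace)
      - ((A.map δ₁ * ψ.map δ₂ * ψ⁻¹).trace - (ψ.map δ₁ * ψ⁻¹ * A.map δ₂).trace)
    = -((A'.map δ₁ * ut₂).trace - (ut₁ * A'.map δ₂).trace)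
        - ((A.map δ₁ * u₂).trace - (u₁ * A.map δ₂).trace)
        + D ((ψ⁻¹ * u₁ * ψ.map δ₂).trace - (ψ⁻¹ * u₂ * ψ.map δ₁).trace) := by
  intro A' ψ' u₁ u₂ ut₁ ut₂
  rw [Matrix.isUnit_iff_isUnit_det] at hg hψ
  have hgh := Matrix.mul_nonsing_inv g hg
  have hhg := Matrix.nonsing_inv_mul g hg
  have hψφ := Matrix.mul_nonsing_inv ψ hψ
  have hφψ := Matrix.nonsing_inv_mul ψ hψ
  have hψ' : ψ'⁻¹ = ψ⁻¹ * g := by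
    rw [Matrix.mul_inv_rev, Matrix.nonsing_inv_nonsing_inv g hg]
  have L₁ : ψ'.map δ₁ * ψ'⁻¹ = -ut₁ + g⁻¹ * (ψ.map δ₁ * ψ⁻¹) * g := by
    rw [hψ']
    exact hδ₁.logDeriv_gauge hgh hhg hψφ
  have L₂ : ψ'.map δ₂ * ψ'⁻¹ = -ut₂ + g⁻¹ * (ψ.map δ₂ * ψ⁻¹) * g := by
    rw [hψ']
    exact hδ₂.logDeriv_gauge hgh hhg hψφ
  have V₁ : g * A'.map δ₁ * g⁻¹ = A.map δ₁ + u₁.map D + (A * u₁ - u₁ * A) :=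
    hD.variation_gauge hδ₁ hcomm₁ A hgh hhg
  have V₂ : g * A'.map δ₂ * g⁻¹ = A.map δ₂ + u₂.map D + (A * u₂ - u₂ * A) :=
    hD.variation_gauge hδ₂ hcomm₂ A hgh hhg
  have T₁₂ := hD.trace_variation_mul (u := u₁) (hD.deriv_logDeriv hδ₂ hcomm₂ hψφ hφψ hsol)
  have T₂₁ := hD.trace_variation_mul (u := u₂) (hD.deriv_logDeriv hδ₁ hcomm₁ hψφ hφψ hsol)
  have cyc : ∀ X p : Matrix (Fin n) (Fin n) R,
      (X * (g⁻¹ * p * g)).trace = (g * X * g⁻¹ * p).trace := by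
    intro X p
    rw [← mul_assoc, Matrix.trace_mul_comm]
    simp only [mul_assoc]
  have cycψ : ∀ u q : Matrix (Fin n) (Fin n) R,
      (ψ⁻¹ * u * q).trace = (u * (q * ψ⁻¹)).trace := by
    intro u q
    rw [mul_assoc, Matrix.trace_mul_comm, mul_assoc]
  rw [mul_assoc (A'.map δ₁), L₁, L₂, mul_assoc (A.map δ₁), cycψ, cycψ, hD.map_sub, mul_add,
    add_mul, Matrix.trace_add, Matrix.trace_add, cyc,
    Matrix.trace_mul_comm (g⁻¹ * (ψ.map δ₁ * ψ⁻¹) * g), cyc, V₁, V₂, add_assoc, add_assoc,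
    add_mul (A.map δ₁), add_mul (A.map δ₂), Matrix.trace_add, Matrix.trace_add, T₁₂, T₂₁,
    mul_neg, neg_mul, Matrix.trace_neg, Matrix.trace_neg,
    Matrix.trace_mul_comm (A.map δ₂) (ψ.map δ₁ * ψ⁻¹), Matrix.trace_mul_comm u₂ (A.map δ₁)]
  ring
end

section
/- Let R be a commutative ring with a derivation δ, let ζ ∈ R be invertible, and let f, g ∈ R. Set M := [[1, 1],[ζ, -ζ]] and Ω := [[f, g],[ζ²·g, f - δ(ζ)·ζ⁻¹]]. Then δ(M) + Ω·M = M·diag(f + ζ·g, f - ζ·g), where δ is applied to M entrywise (so δ(M) = [[0,0],[δ(ζ), -δ(ζ)]]). In particular, whenever 2ζ is invertible (so that M is invertible), the gauge transform M⁻¹·δ(M) + M⁻¹·Ω·M equals the diagonal matrix diag(f + ζ·g, f - ζ·g). -/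
/-- Diagonalization of the ramified local normal form after ramification:
with `M = [[1,1],[ζ,-ζ]]` and `Ω = [[f,g],[ζ²g, f - δ(ζ)ζ⁻¹]]`, one has
`δ(M) + Ω·M = M·diag(f+ζg, f-ζg)`; and if `2ζ` is a unit, the gauge transform
`M⁻¹·δ(M) + M⁻¹·Ω·M` equals `diag(f+ζg, f-ζg)`. -/
theorem stmt11 {R : Type*} [CommRing R] (δ : R → R) (hδ : IsDerivation δ)
    (ζ : R) [Invertible ζ] (f g : R) :
    let M : Matrix (Fin 2) (Fin 2) R := !![1, 1; ζ, -ζ]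
    let Ω : Matrix (Fin 2) (Fin 2) R := !![f, g; ζ ^ 2 * g, f - δ ζ * ⅟ζ]
    M.map δ + Ω * M = M * Matrix.diagonal ![f + ζ * g, f - ζ * g]
    ∧ (IsUnit (2 * ζ) →
        M⁻¹ * M.map δ + M⁻¹ * Ω * M = Matrix.diagonal ![f + ζ * g, f - ζ * g]) := by
  intro M Ω
  have h0 : δ 0 = 0 := by
    have h := hδ.1 0 0
    rw [add_zero] at h
    exact left_eq_add.mp h
  have h1 : δ 1 = 0 := by
    have h := hδ.2 1 1
    rw [mul_one, mul_one, one_mul] at h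
    exact left_eq_add.mp h
  have hneg : δ (-ζ) = -δ ζ := by
    have h := hδ.1 ζ (-ζ)
    rw [add_neg_cancel, h0] at h
    exact (neg_eq_of_add_eq_zero_right h.symm).symm
  have hinv : ⅟ζ * ζ = 1 := invOf_mul_self ζ
  have key : M.map δ + Ω * M = M * Matrix.diagonal ![f + ζ * g, f - ζ * g] := by
    ext i j
    fin_cases i <;> fin_cases j <;>
      simp [M, Ω, Matrix.mul_apply, Fin.sum_univ_two, h1, hneg]
    · ring
    · ring
    · linear_combination (-δ ζ) * hinv
    · linear_combination (δ ζ) * hinv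
  refine ⟨key, fun hu => ?_⟩
  have hdet : IsUnit M.det := by
    have : M.det = -(2 * ζ) := by
      simp only [M, Matrix.det_fin_two_of]
      ring
    rw [this]
    exact hu.neg
  rw [Matrix.mul_assoc, ← Matrix.mul_add, key, Matrix.nonsing_inv_mul_cancel_left _ _ hdet]
end
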